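/- Let D ⊆ ℝⁿ be a bounded measurable set with |D| > 0 and let (q̈_k) be a sequence of measurable antisymmetric functions on D×D with ‖q̈_k‖_{L^{1,2}(D×D)} ≤ 1 for all k. Then there exist a subsequence (q̈_{k'}), an antisymmetric q̂ with ‖q̂‖_{L^{1,2}(D×D)} ≤ 1, and a nonincreasing sequence of measurable sets E_m ⊆ D with |E_m| → 0, such that: (i) for every m and every measurable p̈ : D×D → ℝ with esssup_{x∈D∖E_m} (∫_D p̈(x,x')² dx')^{1/2} < ∞, ∫_{D∖E_m}∫_D (q̈_{k'}(x,x') − q̂(x,x')) p̈(x,x') dx' dx → 0 (biting convergence); and (ii) q̈_{k'} converges to q̂ weakly in L¹(D×D), i.e., ∫_D∫_D (q̈_{k'} − q̂) p̈ dx' dx → 0 for every p̈ ∈ L^∞(D×D). -/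

import Mathlib

/-!
Biting compactness follows Chacon's lemma, applied to the slice norms `x ↦ ‖q_k(x, ·)‖_{L²}`, which
are bounded in `L¹`. Each `q_k` is cut into the pieces living on the slices with
`j ≤ ‖q_k(x, ·)‖_{L²} < j + 1`. For fixed `j` the pieces are bounded in `L²` of the product, so a
diagonal subsequence makes all of them converge weakly, to limits `r j` (`exists_subseq_pieces`).
The mixed norms of the pieces with a given `j` converge along a further subsequence, their limits
have sum at most one, and the `i`-th term of the subsequence is chosen so that the sum of its first
`2 ^ i` norms exceeds the sum of all these limits by at most `2 ^ (-i)`.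
Weak lower semicontinuity of the mixed norm (`mixed_le_of_weak`)
then makes `h = ∑ r j` converge in the mixed norm. The bitten sets are
`E m = ⋃_{i ≥ m} {x | 2 ^ i ≤ ‖q_i(x, ·)‖_{L²}}`, of measure at most `∑_{i ≥ m} 2 ^ (-i)`. Outside
`E m` only the first `2 ^ i` pieces of `q_i` are present; by Hölder's inequality for `L^{1,2}` and
`L^{∞,2}` those with index at least `J` contribute little, uniformly in large `i`, while the finitely
many others converge weakly (`tendsto_of_bitten`). The bound `‖h‖ ≤ 1` comes from lower semicontinuity
applied to the partial sums, and Fatou's lemma (`mixed_tsum_le_one`).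

Antisymmetry passes to `h` by testing on the squares of `(E m)ᶜ` against symmetric functions
(`antisymm_of_bitten`). It also gives weak `L¹` convergence (`weak_of_bitten`): the integral over
`E m × (E m)ᶜ` equals, after exchanging the variables, minus an integral over `(E m)ᶜ × E m`, where
biting convergence applies, and the integral over `E m × E m` is at most a constant times
`|E m| ^ (1 / 2)` by the Cauchy–Schwarz inequality in the second variable.
-/

open MeasureTheory ENNReal Metric Filter
open scoped Topology RealInnerProductSpace

noncomputable section

/-- `Ω` has a Lipschitz boundary: near each boundary point, in a suitable direction `v`,
`Ω` coincides with the strict subgraph of a Lipschitz function that is constant in the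
direction `v`. -/
def HasLipschitzBoundary {n : ℕ} (Ω : Set (EuclideanSpace ℝ (Fin n))) : Prop :=
  ∀ x ∈ frontier Ω, ∃ r : ℝ, 0 < r ∧ ∃ v : EuclideanSpace ℝ (Fin n), ‖v‖ = 1 ∧
    ∃ (L : NNReal) (f : EuclideanSpace ℝ (Fin n) → ℝ), LipschitzWith L f ∧
      (∀ y, f y = f (y - ⟪y, v⟫ • v)) ∧
      (∀ y ∈ Metric.ball x r, (y ∈ Ω ↔ ⟪y, v⟫ < f (y - ⟪y, v⟫ • v)))

/-- The constant `K_{2,n} = |𝕊^{n-1}|⁻¹ ∫_{𝕊^{n-1}} (s·e)² ds`, the average of `(s·e)²`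
over the unit sphere, computed with respect to the surface measure `volume.toSphere`. -/
def K2 (n : ℕ) (e : EuclideanSpace ℝ (Fin n)) : ℝ≥0∞ :=
  (∫⁻ s : sphere (0 : EuclideanSpace ℝ (Fin n)) 1,
      ENNReal.ofReal (⟪(s : EuclideanSpace ℝ (Fin n)), e⟫ ^ 2)
    ∂(volume : Measure (EuclideanSpace ℝ (Fin n))).toSphere) /
  ((volume : Measure (EuclideanSpace ℝ (Fin n))).toSphere Set.univ)

/-- The interaction kernel `ω_δ`: measurable, nonnegative, radial, supported in `B(0,δ)`,
and normalized so that `∫ |z|² ω_δ(z)² dz = K_{2,n}⁻¹` (with `e` a unit vector). -/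
structure IsKernel (n : ℕ) (δ : ℝ) (e : EuclideanSpace ℝ (Fin n))
    (ω : EuclideanSpace ℝ (Fin n) → ℝ) : Prop where
  meas : Measurable ω
  nonneg : ∀ z, 0 ≤ ω z
  radial : ∀ z z', ‖z‖ = ‖z'‖ → ω z = ω z'
  supp : ∀ z, δ ≤ ‖z‖ → ω z = 0
  norm : (∫⁻ z, ENNReal.ofReal (‖z‖ ^ 2 * ω z ^ 2)) = (K2 n e)⁻¹

/-- The nonlocal two-point gradient `Ĝ_δ u (x,x') = (u(x) − u(x')) ω_δ(x − x')`. -/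
def nlGrad {n : ℕ} (ω : EuclideanSpace ℝ (Fin n) → ℝ) (u : EuclideanSpace ℝ (Fin n) → ℝ)
    (x x' : EuclideanSpace ℝ (Fin n)) : ℝ :=
  (u x - u x') * ω (x - x')

/-- The mixed `L^{1,2}` norm of a two-point function on `D × D`, with values in `[0,∞]`. -/
def N12 {n : ℕ} (D : Set (EuclideanSpace ℝ (Fin n)))
    (q : EuclideanSpace ℝ (Fin n) → EuclideanSpace ℝ (Fin n) → ℝ) : ℝ≥0∞ :=
  ∫⁻ x in D, (∫⁻ x' in D, ENNReal.ofReal (q x x' ^ 2)) ^ (1/2 : ℝ)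

/-- The mixed `L^{∞,2}` norm of a two-point function on `D × D`, with values in `[0,∞]`. -/
def Ninf2 {n : ℕ} (D : Set (EuclideanSpace ℝ (Fin n)))
    (q : EuclideanSpace ℝ (Fin n) → EuclideanSpace ℝ (Fin n) → ℝ) : ℝ≥0∞ :=
  essSup (fun x => (∫⁻ x' in D, ENNReal.ofReal (q x x' ^ 2)) ^ (1/2 : ℝ))
    (volume.restrict D)

/-- The squared `L²` norm of a two-point function on `D × D`, with values in `[0,∞]`. -/
def L2sq {n : ℕ} (D : Set (EuclideanSpace ℝ (Fin n)))
    (q : EuclideanSpace ℝ (Fin n) → EuclideanSpace ℝ (Fin n) → ℝ) : ℝ≥0∞ :=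
  ∫⁻ x in D, ∫⁻ x' in D, ENNReal.ofReal (q x x' ^ 2)

/-! ### Weak sequential compactness -/

/-- Sequential Banach–Alaoglu for countably many bounded sequences at once: one subsequence
serves all indices `j`, and also makes the auxiliary extended-real sequences converge. It is
the sequential compactness of a countable product of compact metrizable spaces. -/
lemma exists_subseq_weak {H : Type*} [NormedAddCommGroup H] [InnerProductSpace ℝ H]
    [CompleteSpace H] [TopologicalSpace.SeparableSpace H]
    (u : ℕ → ℕ → H) (C : ℕ → ℝ) (hu : ∀ k j, ‖u k j‖ ≤ C j) (c : ℕ → ℕ → ℝ≥0∞) :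
    ∃ φ : ℕ → ℕ, StrictMono φ ∧ ∃ (v : ℕ → H) (d : ℕ → ℝ≥0∞), ∀ j,
      (∀ w, Tendsto (fun k => ⟪u (φ k) j, w⟫) atTop (𝓝 ⟪v j, w⟫)) ∧
      Tendsto (fun k => c (φ k) j) atTop (𝓝 (d j)) := by
  let K : ℕ → Set (WeakDual ℝ H) := fun j => WeakDual.toStrongDual ⁻¹' closedBall 0 (C j)
  have hKc : ∀ j, IsCompact (K j) := fun j => WeakDual.isCompact_closedBall 0 (C j)
  have : ∀ j, CompactSpace (K j) := fun j => isCompact_iff_compactSpace.mp (hKc j)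
  have : ∀ j, TopologicalSpace.MetrizableSpace (K j) := fun j =>
    WeakDual.metrizable_of_isCompact ℝ H _ (hKc j)
  let U : ℕ → (∀ j, K j) × (ℕ → ℝ≥0∞) := fun k =>
    (fun j => ⟨StrongDual.toWeakDual (InnerProductSpace.toDual ℝ H (u k j)), by
      have h : InnerProductSpace.toDual ℝ H (u k j) ∈ closedBall (0 : StrongDual ℝ H) (C j) := by
        rw [mem_closedBall_zero_iff]
        exact ((InnerProductSpace.toDual ℝ H).norm_map (u k j)).trans_le (hu k j)
      exact h⟩, c k)
  obtain ⟨a, φ, hφ, ha⟩ := CompactSpace.tendsto_subseq U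
  refine ⟨φ, hφ, fun j => (InnerProductSpace.toDual ℝ H).symm
    (WeakDual.toStrongDual (a.1 j : WeakDual ℝ H)), a.2, fun j => ⟨fun w => ?_, ?_⟩⟩
  · have h1 : Continuous fun z : (∀ j, K j) × (ℕ → ℝ≥0∞) => ((z.1 j : WeakDual ℝ H)) w :=
      (WeakDual.eval_continuous w).comp
        (continuous_subtype_val.comp ((continuous_apply j).comp continuous_fst))
    have h2 := (h1.tendsto a).comp ha
    rw [InnerProductSpace.toDual_symm_apply]
    exact h2
  · have h1 : Continuous fun z : (∀ j, K j) × (ℕ → ℝ≥0∞) => z.2 j :=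
      (continuous_apply j).comp continuous_snd
    exact (h1.tendsto a).comp ha

/-- The same statement for square-integrable functions on a separable finite measure space. -/
lemma exists_subseq_weak_L2 {Y : Type*} [MeasurableSpace Y]
    [MeasurableSpace.CountablyGenerated Y] (π : Measure Y) [IsFiniteMeasure π]
    (u : ℕ → ℕ → Y → ℝ) (C : ℕ → ℝ≥0∞) (hC : ∀ j, C j ≠ ∞)
    (hu : ∀ k j, MemLp (u k j) 2 π) (hb : ∀ k j, eLpNorm (u k j) 2 π ≤ C j)
    (c : ℕ → ℕ → ℝ≥0∞) :
    ∃ φ : ℕ → ℕ, StrictMono φ ∧ ∃ (r : ℕ → Y → ℝ) (d : ℕ → ℝ≥0∞), ∀ j,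
      (Measurable (r j) ∧ MemLp (r j) 2 π) ∧
      (∀ w : Y → ℝ, MemLp w 2 π →
        Tendsto (fun k => ∫ y, u (φ k) j y * w y ∂π) atTop (𝓝 (∫ y, r j y * w y ∂π))) ∧
      Tendsto (fun k => c (φ k) j) atTop (𝓝 (d j)) := by
  have : Fact ((2 : ℝ≥0∞) ≠ ∞) := ⟨ENNReal.ofNat_ne_top⟩
  obtain ⟨φ, hφ, v, d, h⟩ := exists_subseq_weak
    (fun k j => (hu k j).toLp (u k j)) (fun j => (C j).toReal)
    (fun k j => by
      rw [Lp.norm_toLp]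
      exact ENNReal.toReal_mono (hC j) (hb k j)) c
  refine ⟨φ, hφ, fun j => (Lp.aestronglyMeasurable (v j)).mk _, d, fun j => ⟨⟨?_, ?_⟩, ?_, (h j).2⟩⟩
  · exact (Lp.aestronglyMeasurable (v j)).stronglyMeasurable_mk.measurable
  · exact (Lp.memLp (v j)).ae_eq (Lp.aestronglyMeasurable (v j)).ae_eq_mk
  · intro w hw
    have key := (h j).1 (hw.toLp w)
    simp only [L2.inner_def] at key
    refine (key.congr fun k => ?_).trans_eq ?_
    · refine integral_congr_ae ?_
      filter_upwards [(hu (φ k) j).coeFn_toLp, hw.coeFn_toLp] with y h1 h2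
      rw [h1, h2]; simp [mul_comm]
    · congr 1
      refine integral_congr_ae ?_
      filter_upwards [(Lp.aestronglyMeasurable (v j)).ae_eq_mk, hw.coeFn_toLp] with y h1 h2
      rw [← h1, h2]; simp [mul_comm]

section

/-! ### The mixed norm and its Hölder inequality -/

variable {X : Type*} [MeasurableSpace X]

/-- The slice norm `x ↦ ‖g(x, ·)‖_{L²(μ)}`, with values in `[0, ∞]`. The mixed `L^{1,2}` norm of
`g` is `∫⁻ x, sl μ g x ∂μ`. -/
def sl (μ : Measure X) (g : X × X → ℝ) (x : X) : ℝ≥0∞ :=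
  (∫⁻ y, ‖g (x, y)‖ₑ ^ (2 : ℝ) ∂μ) ^ (1 / 2 : ℝ)

lemma sl_eq_eLpNorm (μ : Measure X) (g : X × X → ℝ) (x : X) :
    sl μ g x = eLpNorm (fun y => g (x, y)) 2 μ := by
  rw [eLpNorm_eq_lintegral_rpow_enorm_toReal two_ne_zero ENNReal.ofNat_ne_top]
  simp [sl]

lemma measurable_sl (μ : Measure X) [SFinite μ] {g : X × X → ℝ} (hg : Measurable g) :
    Measurable (sl μ g) := by
  have : Measurable fun z : X × X => ‖g z‖ₑ ^ (2 : ℝ) := hg.enorm.pow_const _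
  exact (this.lintegral_prod_right').pow_const _

lemma sl_rpow_two (μ : Measure X) (g : X × X → ℝ) (x : X) :
    sl μ g x ^ (2 : ℝ) = ∫⁻ y, ‖g (x, y)‖ₑ ^ (2 : ℝ) ∂μ := by
  rw [sl, ← ENNReal.rpow_mul]; norm_num

lemma sl_mono (μ : Measure X) {g h : X × X → ℝ} {x : X}
    (H : ∀ y, ‖g (x, y)‖ₑ ≤ ‖h (x, y)‖ₑ) : sl μ g x ≤ sl μ h x := by
  unfold sl
  gcongr with y
  exact H y

lemma eLpNorm_two_eq_sl (μ : Measure X) [SFinite μ] {g : X × X → ℝ} (hg : Measurable g) :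
    eLpNorm g 2 (μ.prod μ) = (∫⁻ x, sl μ g x ^ (2 : ℝ) ∂μ) ^ (1 / 2 : ℝ) := by
  rw [eLpNorm_eq_lintegral_rpow_enorm_toReal two_ne_zero ENNReal.ofNat_ne_top]
  simp only [ENNReal.toReal_ofNat, sl_rpow_two]
  rw [lintegral_prod _ (hg.enorm.pow_const _).aemeasurable]

/-- Slice norms bounded by a constant force square-integrability on a finite measure space. -/
lemma eLpNorm_two_le_of_sl_le (μ : Measure X) [IsFiniteMeasure μ] {g : X × X → ℝ}
    (hg : Measurable g) {M : ℝ≥0∞} (h : ∀ᵐ x ∂μ, sl μ g x ≤ M) :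
    eLpNorm g 2 (μ.prod μ) ≤ (M ^ (2 : ℝ) * μ Set.univ) ^ (1 / 2 : ℝ) := by
  rw [eLpNorm_two_eq_sl μ hg]
  gcongr
  calc ∫⁻ x, sl μ g x ^ (2 : ℝ) ∂μ ≤ ∫⁻ _, M ^ (2 : ℝ) ∂μ := by
        refine lintegral_mono_ae ?_
        filter_upwards [h] with x hx
        gcongr
    _ = _ := lintegral_const _

lemma memLp_two_of_sl_le (μ : Measure X) [IsFiniteMeasure μ] {g : X × X → ℝ}
    (hg : Measurable g) {M : ℝ≥0∞} (hM : M ≠ ∞) (h : ∀ᵐ x ∂μ, sl μ g x ≤ M) :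
    MemLp g 2 (μ.prod μ) := by
  refine ⟨hg.aestronglyMeasurable, (eLpNorm_two_le_of_sl_le μ hg h).trans_lt ?_⟩
  refine ENNReal.rpow_lt_top_of_nonneg (by norm_num) ?_
  exact ENNReal.mul_ne_top (ENNReal.rpow_ne_top_of_nonneg (by norm_num) hM) (measure_ne_top _ _)

lemma holder_sl (μ : Measure X) [SFinite μ] {g w : X × X → ℝ} (hg : Measurable g)
    (hw : Measurable w) :
    ∫⁻ z, ‖g z‖ₑ * ‖w z‖ₑ ∂(μ.prod μ) ≤ ∫⁻ x, sl μ g x * sl μ w x ∂μ := by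
  have hm : Measurable fun z => ‖g z‖ₑ * ‖w z‖ₑ := hg.enorm.mul hw.enorm
  rw [lintegral_prod _ hm.aemeasurable]
  refine lintegral_mono fun x => ?_
  have h1 : Measurable fun y => ‖g (x, y)‖ₑ := (hg.comp measurable_prodMk_left).enorm
  have h2 : Measurable fun y => ‖w (x, y)‖ₑ := (hw.comp measurable_prodMk_left).enorm
  exact ENNReal.lintegral_mul_le_Lp_mul_Lq μ Real.HolderConjugate.two_two
    h1.aemeasurable h2.aemeasurable

/-- Hölder's inequality for the pair `L^{1,2}`, `L^{∞,2}`. -/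
lemma holder_mixed (μ : Measure X) [SFinite μ] {g w : X × X → ℝ} (hg : Measurable g)
    (hw : Measurable w) {M : ℝ≥0∞} (h : ∀ᵐ x ∂μ, sl μ w x ≤ M) :
    ∫⁻ z, ‖g z‖ₑ * ‖w z‖ₑ ∂(μ.prod μ) ≤ (∫⁻ x, sl μ g x ∂μ) * M := by
  refine (holder_sl μ hg hw).trans ?_
  rw [← lintegral_mul_const _ (measurable_sl μ hg)]
  refine lintegral_mono_ae ?_
  filter_upwards [h] with x hx
  gcongr

lemma integrable_mul_of_mixed (μ : Measure X) [SFinite μ] {g w : X × X → ℝ} (hg : Measurable g)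
    (hw : Measurable w) (hgN : ∫⁻ x, sl μ g x ∂μ ≠ ∞) {M : ℝ≥0∞} (hM : M ≠ ∞)
    (h : ∀ᵐ x ∂μ, sl μ w x ≤ M) : Integrable (fun z => g z * w z) (μ.prod μ) := by
  refine ⟨(hg.mul hw).aestronglyMeasurable, ?_⟩
  refine lt_of_le_of_lt ?_ ((holder_mixed μ hg hw h).trans_lt (ENNReal.mul_lt_top hgN.lt_top hM.lt_top))
  exact lintegral_mono fun z => (enorm_mul _ _).le

/-- The slice norm of a bounded function supported, in the second variable, in `A`. -/
lemma sl_le_of_bound (μ : Measure X) {w : X × X → ℝ} {C : ℝ} (hC : ∀ z, |w z| ≤ C)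
    {A : Set X} (hA : MeasurableSet A) (hwA : ∀ x, ∀ y ∉ A, w (x, y) = 0) (x : X) :
    sl μ w x ≤ ENNReal.ofReal C * μ A ^ (1 / 2 : ℝ) := by
  have h : ∫⁻ y, ‖w (x, y)‖ₑ ^ (2 : ℝ) ∂μ ≤ ENNReal.ofReal C ^ (2 : ℝ) * μ A := by
    rw [← lintegral_indicator_const hA]
    refine lintegral_mono fun y => ?_
    by_cases hy : y ∈ A
    · rw [Set.indicator_of_mem hy]
      gcongr
      rw [Real.enorm_eq_ofReal_abs]
      exact ENNReal.ofReal_le_ofReal (hC _)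
    · simp [hwA x y hy]
  calc sl μ w x ≤ (ENNReal.ofReal C ^ (2 : ℝ) * μ A) ^ (1 / 2 : ℝ) := by unfold sl; gcongr
    _ = _ := by
      rw [ENNReal.mul_rpow_of_nonneg _ _ (by norm_num), ← ENNReal.rpow_mul]; norm_num

/-- The mixed norm is lower semicontinuous under weak `L²` convergence. The test function is the
normalization `g(x, ·) / ‖g(x, ·)‖_{L²}`, whose slice norms are at most one; the convention
`t / 0 = 0` takes care of the slices where `g(x, ·)` vanishes or is not square-integrable. -/
lemma mixed_le_of_weak (μ : Measure X) [IsFiniteMeasure μ] {g : ℕ → X × X → ℝ} {r : X × X → ℝ}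
    (hg : ∀ k, Measurable (g k)) (hr : Measurable r) (hr2 : MemLp r 2 (μ.prod μ))
    (hw : ∀ w : X × X → ℝ, MemLp w 2 (μ.prod μ) →
      Tendsto (fun k => ∫ z, g k z * w z ∂(μ.prod μ)) atTop (𝓝 (∫ z, r z * w z ∂(μ.prod μ))))
    {b : ℕ → ℝ≥0∞} {b' : ℝ≥0∞} (hb : ∀ k, ∫⁻ x, sl μ (g k) x ∂μ ≤ b k)
    (hb' : Tendsto b atTop (𝓝 b')) : ∫⁻ x, sl μ r x ∂μ ≤ b' := by
  set f : X → ℝ := fun x => (sl μ r x).toReal with hf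
  have hfm : Measurable f := (measurable_sl μ hr).ennreal_toReal
  set w : X × X → ℝ := fun z => r z / f z.1 with hwdef
  have hwm : Measurable w := hr.div (hfm.comp measurable_fst)
  have hfin : ∀ᵐ x ∂μ, sl μ r x < ∞ := by
    have h1 : ∫⁻ x, sl μ r x ^ (2 : ℝ) ∂μ ≠ ∞ := by
      have := hr2.2
      rw [eLpNorm_two_eq_sl μ hr] at this
      intro h
      rw [h] at this
      norm_num at this
    filter_upwards [ae_lt_top ((measurable_sl μ hr).pow_const _) h1] with x hx
    by_contra h
    rw [not_lt, top_le_iff] at h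
    simp [h] at hx
  have hw1 : ∀ x, sl μ w x ≤ 1 := by
    intro x
    have h1 : (fun y => w (x, y)) = (f x)⁻¹ • fun y => r (x, y) := by
      ext y; simp [hwdef, div_eq_inv_mul]
    rw [sl_eq_eLpNorm, h1, eLpNorm_const_smul, ← sl_eq_eLpNorm]
    by_cases h0 : f x = 0
    · simp [h0]
    · rw [hf, ENNReal.toReal_eq_zero_iff, not_or] at h0
      rw [Real.enorm_of_nonneg (inv_nonneg.2 ENNReal.toReal_nonneg),
        ENNReal.ofReal_inv_of_pos (ENNReal.toReal_pos h0.1 h0.2), ENNReal.ofReal_toReal h0.2,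
        ENNReal.inv_mul_cancel h0.1 h0.2]
  have hwL : MemLp w 2 (μ.prod μ) :=
    memLp_two_of_sl_le μ hwm one_ne_top (Eventually.of_forall hw1)
  have hpos : ∀ z, 0 ≤ r z * w z := fun z => by
    have : r z * w z = r z ^ 2 / f z.1 := by simp only [hwdef]; ring
    rw [this]
    exact div_nonneg (sq_nonneg _) ENNReal.toReal_nonneg
  have hgw : Integrable (fun z => r z * w z) (μ.prod μ) := hr2.integrable_mul hwL
  have hrw : Measurable fun z => ENNReal.ofReal (r z * w z) := (hr.mul hwm).ennreal_ofReal
  have hval : ∫⁻ x, sl μ r x ∂μ ≤ ‖∫ z, r z * w z ∂(μ.prod μ)‖ₑ := by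
    rw [Real.enorm_of_nonneg (integral_nonneg hpos),
      ofReal_integral_eq_lintegral_ofReal hgw (Eventually.of_forall hpos),
      lintegral_prod _ hrw.aemeasurable]
    refine lintegral_mono_ae ?_
    filter_upwards [hfin] with x hx
    have h2 : ∀ y, ENNReal.ofReal (r (x, y) * w (x, y))
        = ‖r (x, y)‖ₑ ^ (2 : ℝ) * ENNReal.ofReal (f x)⁻¹ := by
      intro y
      rw [Real.enorm_eq_ofReal_abs, ENNReal.ofReal_rpow_of_nonneg (abs_nonneg _) (by norm_num),
        ← ENNReal.ofReal_mul (by positivity)]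
      congr 1
      simp only [hwdef, Real.rpow_two, sq_abs]
      ring
    simp only [h2]
    have hrx : Measurable fun y => ‖r (x, y)‖ₑ ^ (2 : ℝ) :=
      (hr.comp measurable_prodMk_left).enorm.pow_const _
    rw [lintegral_mul_const _ hrx, ← sl_rpow_two]
    by_cases h0 : sl μ r x = 0
    · simp [h0]
    · rw [ENNReal.ofReal_inv_of_pos (ENNReal.toReal_pos h0 hx.ne), ENNReal.ofReal_toReal hx.ne,
        ENNReal.rpow_two, sq, mul_assoc, ENNReal.mul_inv_cancel h0 hx.ne, mul_one]
  refine hval.trans (le_of_tendsto_of_tendsto' (hw w hwL).enorm hb' fun k => ?_)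
  refine (enorm_integral_le_lintegral_enorm _).trans ?_
  simp only [enorm_mul]
  simpa using (holder_mixed μ (hg k) hwm (Eventually.of_forall hw1)).trans
    (mul_le_mul_left (hb k) 1)

/-- Fatou's lemma for the mixed norm. -/
lemma mixed_le_of_tendsto (μ : Measure X) [SFinite μ] {g : ℕ → X × X → ℝ} {r : X × X → ℝ}
    (hg : ∀ k, Measurable (g k))
    (h : ∀ᵐ z ∂(μ.prod μ), Tendsto (fun k => g k z) atTop (𝓝 (r z)))
    {b : ℝ≥0∞} (hb : ∀ k, ∫⁻ x, sl μ (g k) x ∂μ ≤ b) : ∫⁻ x, sl μ r x ∂μ ≤ b := by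
  calc ∫⁻ x, sl μ r x ∂μ ≤ ∫⁻ x, liminf (fun k => sl μ (g k) x) atTop ∂μ := by
        refine lintegral_mono_ae ?_
        filter_upwards [Measure.ae_ae_of_ae_prod h] with x hx
        simp only [sl_eq_eLpNorm]
        exact Lp.eLpNorm_lim_le_liminf_eLpNorm
          (fun k => ((hg k).comp measurable_prodMk_left).aestronglyMeasurable) _ hx
    _ ≤ liminf (fun k => ∫⁻ x, sl μ (g k) x ∂μ) atTop :=
        lintegral_liminf_le fun k => measurable_sl μ (hg k)
    _ ≤ b := liminf_le_of_le (by isBoundedDefault) fun c hc => by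
        obtain ⟨k, hk⟩ := hc.exists
        exact hk.trans (hb k)

/-! ### Slicing by the size of the slice norm -/

/-- The part of `q` living on the slices `x` with `j ≤ ‖q(x, ·)‖_{L²} < j + 1`. -/
def pc (μ : Measure X) (q : X × X → ℝ) (j : ℕ) : X × X → ℝ :=
  {z : X × X | sl μ q z.1 ≠ ∞ ∧ ⌊(sl μ q z.1).toReal⌋₊ = j}.indicator q

lemma measurable_pc (μ : Measure X) [SFinite μ] {q : X × X → ℝ} (hq : Measurable q) (j : ℕ) :
    Measurable (pc μ q j) := by
  have h : Measurable fun z : X × X => sl μ q z.1 := (measurable_sl μ hq).comp measurable_fst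
  refine hq.indicator (MeasurableSet.inter ?_ ?_)
  · exact (h (measurableSet_singleton ∞)).compl
  · exact (Nat.measurable_floor.comp h.ennreal_toReal) (measurableSet_singleton j)

open Classical in
lemma sl_pc (μ : Measure X) (q : X × X → ℝ) (j : ℕ) (x : X) :
    sl μ (pc μ q j) x =
      if sl μ q x ≠ ∞ ∧ ⌊(sl μ q x).toReal⌋₊ = j then sl μ q x else 0 := by
  split_ifs with h
  · have : ∀ y, pc μ q j (x, y) = q (x, y) := fun y => Set.indicator_of_mem (by exact h) _
    simp only [sl, this]
  · have : ∀ y, pc μ q j (x, y) = 0 := fun y => Set.indicator_of_notMem (by exact h) _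
    simp [sl, this]

lemma sl_pc_le (μ : Measure X) (q : X × X → ℝ) (j : ℕ) (x : X) :
    sl μ (pc μ q j) x ≤ (j + 1 : ℕ) := by
  classical
  rw [sl_pc]
  split_ifs with h
  · rw [← ENNReal.ofReal_toReal h.1, ← h.2, ← ENNReal.ofReal_natCast]
    refine ENNReal.ofReal_le_ofReal ?_
    push_cast
    exact (Nat.lt_floor_add_one _).le
  · exact zero_le

lemma sum_mixed_pc_le (μ : Measure X) [SFinite μ] {q : X × X → ℝ} (hq : Measurable q) (J : ℕ) :
    ∑ j ∈ Finset.range J, ∫⁻ x, sl μ (pc μ q j) x ∂μ ≤ ∫⁻ x, sl μ q x ∂μ := by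
  classical
  rw [← lintegral_finsetSum _ fun j _ => measurable_sl μ (measurable_pc μ hq j)]
  refine lintegral_mono fun x => ?_
  simp only [sl_pc]
  by_cases h : sl μ q x = ∞
  · simp [h]
  · simp only [ne_eq, h, not_false_eq_true, true_and, Finset.sum_ite_eq]
    split_ifs <;> simp

lemma eq_sum_pc (μ : Measure X) (q : X × X → ℝ) {L : ℕ} {z : X × X}
    (hz : sl μ q z.1 < L) : q z = ∑ j ∈ Finset.range L, pc μ q j z := by
  classical
  have h : sl μ q z.1 ≠ ∞ := hz.ne_top
  have hL : ⌊(sl μ q z.1).toReal⌋₊ < L := by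
    rw [Nat.floor_lt ENNReal.toReal_nonneg]
    exact_mod_cast (ENNReal.toReal_lt_toReal h (ENNReal.natCast_ne_top L)).2 hz
  simp [pc, Set.indicator_apply, h, Finset.sum_ite_eq, hL]

/-- The data extracted from a bounded sequence: a subsequence `φ` along which every piece
converges weakly in `L²` to `r j`, every piece has convergent mixed norm with limit `d j`, and
the first `2 ^ i` pieces of the `i`-th term carry at most `2⁻ⁱ` more than the limiting total
mass. The last property is what rules out concentration on the retained part. -/
lemma exists_subseq_pieces [MeasurableSpace.CountablyGenerated X] (μ : Measure X)
    [IsFiniteMeasure μ] (q : ℕ → X × X → ℝ) (hq : ∀ k, Measurable (q k))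
    (hb : ∀ k, ∫⁻ x, sl μ (q k) x ∂μ ≤ 1) :
    ∃ φ : ℕ → ℕ, StrictMono φ ∧ ∃ (r : ℕ → X × X → ℝ) (d : ℕ → ℝ≥0∞),
      (∀ j, Measurable (r j)) ∧ (∀ j, MemLp (r j) 2 (μ.prod μ)) ∧
      (∀ j, ∀ w : X × X → ℝ, MemLp w 2 (μ.prod μ) →
        Tendsto (fun k => ∫ z, pc μ (q (φ k)) j z * w z ∂(μ.prod μ)) atTop
          (𝓝 (∫ z, r j z * w z ∂(μ.prod μ)))) ∧
      (∀ j, Tendsto (fun k => ∫⁻ x, sl μ (pc μ (q (φ k)) j) x ∂μ) atTop (𝓝 (d j))) ∧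
      (∀ i, ∑ j ∈ Finset.range (2 ^ i), ∫⁻ x, sl μ (pc μ (q (φ i)) j) x ∂μ
        ≤ ∑' j, d j + 2⁻¹ ^ i) := by
  obtain ⟨ψ, hψ, r, d, h⟩ := exists_subseq_weak_L2 (μ.prod μ)
    (fun k j => pc μ (q k) j) (fun j => (((j + 1 : ℕ) : ℝ≥0∞) ^ (2 : ℝ) * μ Set.univ) ^ (1 / 2 : ℝ))
    (fun j => ENNReal.rpow_ne_top_of_nonneg (by norm_num) (ENNReal.mul_ne_top
      (ENNReal.rpow_ne_top_of_nonneg (by norm_num) (ENNReal.natCast_ne_top _))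
      (measure_ne_top _ _)))
    (fun k j => memLp_two_of_sl_le μ (measurable_pc μ (hq k) j) (ENNReal.natCast_ne_top _)
      (Eventually.of_forall (sl_pc_le μ (q k) j)))
    (fun k j => eLpNorm_two_le_of_sl_le μ (measurable_pc μ (hq k) j)
      (Eventually.of_forall (sl_pc_le μ (q k) j)))
    (fun k j => ∫⁻ x, sl μ (pc μ (q k) j) x ∂μ)
  have hsum : ∀ J, Tendsto (fun k => ∑ j ∈ Finset.range J, ∫⁻ x, sl μ (pc μ (q (ψ k)) j) x ∂μ)
      atTop (𝓝 (∑ j ∈ Finset.range J, d j)) := fun J => tendsto_finsetSum _ fun j _ => (h j).2.2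
  have hd : ∑' j, d j ≤ 1 := ENNReal.tsum_le_of_sum_range_le fun J =>
    le_of_tendsto' (hsum J) fun k => (sum_mixed_pc_le μ (hq _) J).trans (hb _)
  have hev : ∀ i : ℕ, ∀ᶠ k in atTop,
      ∑ j ∈ Finset.range (2 ^ i), ∫⁻ x, sl μ (pc μ (q (ψ k)) j) x ∂μ ≤ ∑' j, d j + 2⁻¹ ^ i := by
    intro i
    have : ∑ j ∈ Finset.range (2 ^ i), d j < ∑' j, d j + 2⁻¹ ^ i :=
      (ENNReal.sum_le_tsum _).trans_lt (ENNReal.lt_add_right (hd.trans_lt one_lt_top).ne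
        (pow_ne_zero _ (by simp)))
    exact ((hsum (2 ^ i)).eventually_lt_const this).mono fun _ hk => hk.le
  obtain ⟨θ, hθ, hθ'⟩ := extraction_forall_of_eventually hev
  exact ⟨ψ ∘ θ, hψ.comp hθ, r, d, fun j => (h j).1.1, fun j => (h j).1.2,
    fun j w hw => ((h j).2.1 w hw).comp hθ.tendsto_atTop,
    fun j => (h j).2.2.comp hθ.tendsto_atTop, hθ'⟩

/-! ### The limit function -/

/-- If the mixed norms of the `r j` are summable, the tails of the series `∑ r j`, tested against
a function with bounded slice norms, are controlled by the tails of the series of norms. -/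
lemma tail_tsum_le (μ : Measure X) [IsFiniteMeasure μ] {r : ℕ → X × X → ℝ} {d : ℕ → ℝ≥0∞}
    (hr : ∀ j, Measurable (r j)) (hrd : ∀ j, ∫⁻ x, sl μ (r j) x ∂μ ≤ d j)
    (hsum : ∀ᵐ z ∂(μ.prod μ), Summable fun j => r j z)
    {p : X × X → ℝ} (hp : Measurable p) {M : ℝ≥0∞} (hpM : ∀ᵐ x ∂μ, sl μ p x ≤ M) (J : ℕ) :
    ∫⁻ z, ‖∑' j, r j z - ∑ j ∈ Finset.range J, r j z‖ₑ * ‖p z‖ₑ ∂(μ.prod μ)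
      ≤ (∑' j, d (j + J)) * M := by
  calc ∫⁻ z, ‖∑' j, r j z - ∑ j ∈ Finset.range J, r j z‖ₑ * ‖p z‖ₑ ∂(μ.prod μ)
      ≤ ∫⁻ z, ∑' j, ‖r (j + J) z‖ₑ * ‖p z‖ₑ ∂(μ.prod μ) := by
        refine lintegral_mono_ae ?_
        filter_upwards [hsum] with z hz
        rw [ENNReal.tsum_mul_right, ← hz.sum_add_tsum_nat_add J, add_sub_cancel_left]
        gcongr
        exact enorm_tsum_le_tsum_enorm
    _ = ∑' j, ∫⁻ z, ‖r (j + J) z‖ₑ * ‖p z‖ₑ ∂(μ.prod μ) :=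
        lintegral_tsum fun j => ((hr _).enorm.mul hp.enorm).aemeasurable
    _ ≤ ∑' j, d (j + J) * M := by
        refine ENNReal.tsum_le_tsum fun j => ?_
        exact (holder_mixed μ (hr _) hp hpM).trans (by gcongr; exact hrd _)
    _ = _ := ENNReal.tsum_mul_right

/-- Summability of the mixed norms gives absolute convergence almost everywhere. -/
lemma ae_summable_of_mixed (μ : Measure X) [IsFiniteMeasure μ] {r : ℕ → X × X → ℝ}
    {d : ℕ → ℝ≥0∞} (hr : ∀ j, Measurable (r j)) (hrd : ∀ j, ∫⁻ x, sl μ (r j) x ∂μ ≤ d j)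
    (hd : ∑' j, d j ≤ 1) : ∀ᵐ z ∂(μ.prod μ), Summable fun j => r j z := by
  have h1 : ∀ j, ∫⁻ z, ‖r j z‖ₑ ∂(μ.prod μ) ≤ d j * μ Set.univ ^ (1 / 2 : ℝ) := fun j => by
    have h := sl_le_of_bound μ (w := fun _ : X × X => (1 : ℝ)) (C := 1) (by simp)
      MeasurableSet.univ (by simp)
    have h2 := holder_mixed μ (hr j) measurable_const (Eventually.of_forall h)
    simp only [enorm_one, mul_one, ENNReal.ofReal_one, one_mul] at h2
    exact h2.trans (by gcongr; exact hrd j)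
  have h2 : ∫⁻ z, ∑' j, ‖r j z‖ₑ ∂(μ.prod μ) ≠ ∞ := by
    rw [lintegral_tsum fun j => (hr j).enorm.aemeasurable]
    refine ne_top_of_le_ne_top ?_ (ENNReal.tsum_le_tsum h1)
    rw [ENNReal.tsum_mul_right]
    exact ENNReal.mul_ne_top (ne_top_of_le_ne_top one_ne_top hd)
      (ENNReal.rpow_ne_top_of_nonneg (by norm_num) (measure_ne_top _ _))
  filter_upwards [ae_lt_top (Measurable.tsum fun j => (hr j).enorm) h2] with z hz
  exact Summable.of_enorm hz.ne

/-- The sum of the weak limits of the pieces still has mixed norm at most one: its partial sums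
are weak limits of partial sums of pieces, and Fatou's lemma passes to the series. -/
lemma mixed_tsum_le_one (μ : Measure X) [IsFiniteMeasure μ] {q : ℕ → X × X → ℝ}
    (hq : ∀ k, Measurable (q k)) (hb : ∀ k, ∫⁻ x, sl μ (q k) x ∂μ ≤ 1)
    {r : ℕ → X × X → ℝ} (hr : ∀ j, Measurable (r j)) (hr2 : ∀ j, MemLp (r j) 2 (μ.prod μ))
    (hw : ∀ j, ∀ w : X × X → ℝ, MemLp w 2 (μ.prod μ) →
        Tendsto (fun k => ∫ z, pc μ (q k) j z * w z ∂(μ.prod μ)) atTop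
          (𝓝 (∫ z, r j z * w z ∂(μ.prod μ))))
    (hsum : ∀ᵐ z ∂(μ.prod μ), Summable fun j => r j z) :
    ∫⁻ x, sl μ (fun z => ∑' j, r j z) x ∂μ ≤ 1 := by
  have hpart : ∀ (k J : ℕ) (z : X × X), ‖∑ j ∈ Finset.range J, pc μ (q k) j z‖ₑ ≤ ‖q k z‖ₑ := by
    intro k J z
    classical
    by_cases h : sl μ (q k) z.1 = ∞
    · simp [pc, h]
    · simp only [pc, Set.indicator_apply, Set.mem_ofPred_eq, ne_eq, h, not_false_eq_true, true_and,
        Finset.sum_ite_eq]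
      split_ifs <;> simp
  have hpc2 : ∀ k j, MemLp (pc μ (q k) j) 2 (μ.prod μ) := fun k j =>
    memLp_two_of_sl_le μ (measurable_pc μ (hq k) j) (ENNReal.natCast_ne_top _)
      (Eventually.of_forall (sl_pc_le μ (q k) j))
  refine mixed_le_of_tendsto μ (g := fun J z => ∑ j ∈ Finset.range J, r j z)
    (fun J => Finset.measurable_sum _ fun j _ => hr j)
    (hsum.mono fun z hz => hz.hasSum.tendsto_sum_nat) fun J => ?_
  refine mixed_le_of_weak μ (g := fun k z => ∑ j ∈ Finset.range J, pc μ (q k) j z)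
    (fun k => Finset.measurable_sum _ fun j _ => measurable_pc μ (hq k) j)
    (Finset.measurable_sum _ fun j _ => hr j) (memLp_finsetSum _ fun j _ => hr2 j)
    (fun w hwL => ?_) (b := fun _ => 1)
    (fun k => (lintegral_mono fun x => sl_mono μ fun y => hpart k J _).trans (hb k))
    tendsto_const_nhds
  simp only [Finset.sum_mul]
  rw [integral_finsetSum (f := fun j z => r j z * w z) _ fun j _ => (hr2 j).integrable_mul hwL]
  simp only [fun k => integral_finsetSum (μ := μ.prod μ) (Finset.range J)
    (f := fun j z => pc μ (q k) j z * w z) fun j _ => (hpc2 k j).integrable_mul hwL]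
  exact tendsto_finsetSum _ fun j _ => hw j w hwL

/-! ### Biting convergence -/

/-- Convergence against a test function `p` supported where `‖q_i(x, ·)‖_{L²} < 2 ^ i` for all
large `i`. The first `J` pieces converge weakly; the remaining ones are uniformly small because
the total mass of the pieces of `q_i` up to level `2 ^ i` does not exceed the limiting mass. -/
lemma tendsto_of_bitten (μ : Measure X) [IsFiniteMeasure μ] {q : ℕ → X × X → ℝ}
    (hq : ∀ k, Measurable (q k)) (hb : ∀ k, ∫⁻ x, sl μ (q k) x ∂μ ≤ 1)
    {r : ℕ → X × X → ℝ} {d : ℕ → ℝ≥0∞} (hr : ∀ j, Measurable (r j))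
    (hw : ∀ j, ∀ w : X × X → ℝ, MemLp w 2 (μ.prod μ) →
        Tendsto (fun k => ∫ z, pc μ (q k) j z * w z ∂(μ.prod μ)) atTop
          (𝓝 (∫ z, r j z * w z ∂(μ.prod μ))))
    (hc : ∀ j, Tendsto (fun k => ∫⁻ x, sl μ (pc μ (q k) j) x ∂μ) atTop (𝓝 (d j)))
    (hT : ∀ i, ∑ j ∈ Finset.range (2 ^ i), ∫⁻ x, sl μ (pc μ (q i) j) x ∂μ ≤ ∑' j, d j + 2⁻¹ ^ i)
    (hd : ∑' j, d j ≤ 1) (hrd : ∀ j, ∫⁻ x, sl μ (r j) x ∂μ ≤ d j)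
    (hqhat : ∫⁻ x, sl μ (fun z => ∑' j, r j z) x ∂μ ≤ 1)
    {p : X × X → ℝ} (hp : Measurable p) {M : ℝ≥0∞} (hM : M ≠ ∞) (hpM : ∀ᵐ x ∂μ, sl μ p x ≤ M)
    {m : ℕ} (hpm : ∀ i ≥ m, ∀ z, p z ≠ 0 → sl μ (q i) z.1 < 2 ^ i) :
    Tendsto (fun i => ∫ z, (q i z - ∑' j, r j z) * p z ∂(μ.prod μ)) atTop (𝓝 0) := by
  have hdtop : ∑' j, d j ≠ ∞ := ne_top_of_le_ne_top one_ne_top hd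
  have hsum := ae_summable_of_mixed μ hr hrd hd
  have hqhm : Measurable fun z => ∑' j, r j z := Measurable.tsum hr
  have hpL : MemLp p 2 (μ.prod μ) := memLp_two_of_sl_le μ hp hM hpM
  have i1 : ∀ i, Integrable (fun z => q i z * p z) (μ.prod μ) := fun i =>
    integrable_mul_of_mixed μ (hq i) hp (ne_top_of_le_ne_top one_ne_top (hb i)) hM hpM
  have i2 : Integrable (fun z => (∑' j, r j z) * p z) (μ.prod μ) :=
    integrable_mul_of_mixed μ hqhm hp (ne_top_of_le_ne_top one_ne_top hqhat) hM hpM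
  have i3 : ∀ j, Integrable (fun z => r j z * p z) (μ.prod μ) := fun j =>
    integrable_mul_of_mixed μ (hr j) hp
      (ne_top_of_le_ne_top hdtop ((hrd j).trans (ENNReal.le_tsum j))) hM hpM
  have i4 : ∀ i j, Integrable (fun z => pc μ (q i) j z * p z) (μ.prod μ) := fun i j =>
    (memLp_two_of_sl_le μ (measurable_pc μ (hq i) j) (ENNReal.natCast_ne_top _)
      (Eventually.of_forall (sl_pc_le μ (q i) j))).integrable_mul hpL
  rw [tendsto_zero_iff_enorm_tendsto_zero, ENNReal.tendsto_nhds_zero]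
  intro ε₀ hε₀
  wlog hε₀t : ε₀ ≠ ∞ generalizing ε₀
  · exact Eventually.of_forall fun i => by simp [not_not.1 hε₀t]
  set ε := ε₀ / (1 + 3 * M) with hεdef
  have h3M : 1 + 3 * M ≠ ∞ := by simp [hM, ENNReal.mul_eq_top]
  have hε : 0 < ε := ENNReal.div_pos hε₀.ne' h3M
  have hεt : ε ≠ ∞ := ENNReal.div_ne_top hε₀t (by simp)
  obtain ⟨J, hJ⟩ := ((ENNReal.tendsto_sum_nat_add d hdtop).eventually_lt_const hε).exists
  -- The finitely many pieces below level `J` converge weakly.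
  have hlow : Tendsto (fun i => ∑ j ∈ Finset.range J,
      (∫ z, pc μ (q i) j z * p z ∂(μ.prod μ) - ∫ z, r j z * p z ∂(μ.prod μ))) atTop (𝓝 0) := by
    rw [← Finset.sum_const_zero (s := Finset.range J) (ι := ℕ)]
    exact tendsto_finsetSum _ fun j _ => tendsto_sub_nhds_zero_iff.2 (hw j p hpL)
  rw [tendsto_zero_iff_enorm_tendsto_zero, ENNReal.tendsto_nhds_zero] at hlow
  have hpow : ∀ᶠ i : ℕ in atTop, J ≤ 2 ^ i :=
    (tendsto_pow_atTop_atTop_of_one_lt Nat.one_lt_two).eventually_ge_atTop J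
  -- The mass of the pieces of `q i` between levels `J` and `2 ^ i`.
  have hhigh : ∀ᶠ i in atTop,
      ∑ j ∈ Finset.Ico J (2 ^ i), ∫⁻ x, sl μ (pc μ (q i) j) x ∂μ ≤ 2 * ε := by
    have hlim : Tendsto (fun i : ℕ => (∑' j, d j + 2⁻¹ ^ i) -
        ∑ j ∈ Finset.range J, ∫⁻ x, sl μ (pc μ (q i) j) x ∂μ) atTop
        (𝓝 ((∑' j, d j + 0) - ∑ j ∈ Finset.range J, d j)) := by
      refine ENNReal.Tendsto.sub (tendsto_const_nhds.add
        (ENNReal.tendsto_pow_atTop_nhds_zero_of_lt_one (by simp)))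
        (tendsto_finsetSum _ fun j _ => hc j) (Or.inl (by simpa using hdtop))
    have hval : (∑' j, d j + 0) - ∑ j ∈ Finset.range J, d j < 2 * ε := by
      have h1 : ∑' j, d j = ∑ j ∈ Finset.range J, d j + ∑' j, d (j + J) :=
        (ENNReal.summable.sum_add_tsum_nat_add' (f := d) (k := J)).symm
      rw [add_zero, h1, ENNReal.add_sub_cancel_left
        (ne_top_of_le_ne_top hdtop (ENNReal.sum_le_tsum _))]
      refine hJ.trans ?_
      rw [two_mul]
      exact ENNReal.lt_add_right hεt hε.ne'
    filter_upwards [hlim.eventually_lt_const hval, hpow] with i hi hJi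
    refine le_trans (ENNReal.le_sub_of_add_le_left ?_ ?_) hi.le
    · refine ne_top_of_le_ne_top one_ne_top ((sum_mixed_pc_le μ (hq i) J).trans (hb i))
    · rw [Finset.sum_range_add_sum_Ico _ hJi]
      exact hT i
  filter_upwards [hlow ε hε, hhigh, eventually_ge_atTop m, hpow] with i hi1 hi2 him hJi
  have hsplit : ∫ z, (q i z - ∑' j, r j z) * p z ∂(μ.prod μ) =
      ∑ j ∈ Finset.range J,
        (∫ z, pc μ (q i) j z * p z ∂(μ.prod μ) - ∫ z, r j z * p z ∂(μ.prod μ)) +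
      (∫ z, (q i z - ∑ j ∈ Finset.range J, pc μ (q i) j z) * p z ∂(μ.prod μ) -
        ∫ z, (∑' j, r j z - ∑ j ∈ Finset.range J, r j z) * p z ∂(μ.prod μ)) := by
    simp only [sub_mul, Finset.sum_mul]
    rw [integral_sub (i1 i) i2, integral_sub (i1 i) (integrable_finsetSum _ fun j _ => i4 i j),
      integral_sub i2 (integrable_finsetSum _ fun j _ => i3 j),
      integral_finsetSum _ fun j _ => i4 i j, integral_finsetSum _ fun j _ => i3 j,
      Finset.sum_sub_distrib]
    ring
  have ht1 : ‖∫ z, (q i z - ∑ j ∈ Finset.range J, pc μ (q i) j z) * p z ∂(μ.prod μ)‖ₑ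
      ≤ 2 * ε * M := by
    calc _ ≤ ∫⁻ z, ∑ j ∈ Finset.Ico J (2 ^ i), ‖pc μ (q i) j z‖ₑ * ‖p z‖ₑ ∂(μ.prod μ) := by
          refine (enorm_integral_le_lintegral_enorm _).trans (lintegral_mono fun z => ?_)
          rw [enorm_mul, ← Finset.sum_mul]
          by_cases hz : p z = 0
          · simp [hz]
          · have hlt : sl μ (q i) z.1 < (2 ^ i : ℕ) := by exact_mod_cast hpm i him z hz
            gcongr
            rw [eq_sum_pc μ (q i) hlt, ← Finset.sum_range_add_sum_Ico _ hJi, add_sub_cancel_left]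
            exact enorm_sum_le _ _
      _ = ∑ j ∈ Finset.Ico J (2 ^ i), ∫⁻ z, ‖pc μ (q i) j z‖ₑ * ‖p z‖ₑ ∂(μ.prod μ) :=
          lintegral_finsetSum _ fun j _ => (measurable_pc μ (hq i) j).enorm.mul hp.enorm
      _ ≤ ∑ j ∈ Finset.Ico J (2 ^ i), (∫⁻ x, sl μ (pc μ (q i) j) x ∂μ) * M :=
          Finset.sum_le_sum fun j _ => holder_mixed μ (measurable_pc μ (hq i) j) hp hpM
      _ ≤ _ := by rw [← Finset.sum_mul]; gcongr
  have ht2 : ‖∫ z, (∑' j, r j z - ∑ j ∈ Finset.range J, r j z) * p z ∂(μ.prod μ)‖ₑ ≤ ε * M := by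
    refine (enorm_integral_le_lintegral_enorm _).trans ?_
    simp only [enorm_mul]
    refine (tail_tsum_le μ hr hrd hsum hp hpM J).trans ?_
    gcongr
  rw [hsplit]
  calc _ ≤ ε + (2 * ε * M + ε * M) :=
        (enorm_add_le _ _).trans (add_le_add hi1 (enorm_sub_le.trans (add_le_add ht1 ht2)))
    _ = (1 + 3 * M) * ε := by ring
    _ ≤ ε₀ := ENNReal.mul_div_le

/-! ### Antisymmetry and weak convergence in `L¹` -/

lemma integral_swap_eq_neg (μ : Measure X) [SFinite μ] {g p : X × X → ℝ}
    (hg : ∀ᵐ z ∂(μ.prod μ), g z = -g z.swap) :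
    ∫ z, g z * p z ∂(μ.prod μ) = -∫ z, g z * p z.swap ∂(μ.prod μ) := by
  rw [← integral_prod_swap, ← integral_neg]
  refine integral_congr_ae ?_
  filter_upwards [hg] with z hz
  rw [hz, neg_mul, neg_neg]

/-- Antisymmetry passes to the biting limit `h`. On the square of `(E m)ᶜ` the function
`s = h + h ∘ swap` is tested against the bounded symmetric function `s / (1 + |s|)`: the
antisymmetric `q i` contribute zero. -/
lemma antisymm_of_bitten (μ : Measure X) [IsFiniteMeasure μ] {q : ℕ → X × X → ℝ}
    (hq : ∀ k, Measurable (q k)) (hb : ∀ k, ∫⁻ x, sl μ (q k) x ∂μ ≤ 1)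
    (hqa : ∀ k, ∀ᵐ z ∂(μ.prod μ), q k z = -q k z.swap)
    {h : X × X → ℝ} (hh : Measurable h) (hhb : ∫⁻ x, sl μ h x ∂μ ≤ 1)
    {E : ℕ → Set X} (hE : ∀ m, MeasurableSet (E m)) (hEanti : Antitone E)
    (hE0 : Tendsto (fun m => μ (E m)) atTop (𝓝 0))
    (hbite : ∀ (m : ℕ) (p : X × X → ℝ), Measurable p → ∀ M : ℝ≥0∞, M ≠ ∞ →
      (∀ᵐ x ∂μ, sl μ p x ≤ M) → (∀ z : X × X, z.1 ∈ E m → p z = 0) →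
      Tendsto (fun i => ∫ z, (q i z - h z) * p z ∂(μ.prod μ)) atTop (𝓝 0)) :
    ∀ᵐ z ∂(μ.prod μ), h z = -h z.swap := by
  set s : X × X → ℝ := fun z => h z + h z.swap with hs
  have hsm : Measurable s := hh.add (hh.comp measurable_swap)
  have hss : ∀ z, s z.swap = s z := fun z => by simp [hs, add_comm]
  have key : ∀ m, ∀ᵐ z ∂(μ.prod μ), z ∈ (E m)ᶜ ×ˢ (E m)ᶜ → s z = 0 := by
    intro m
    set G : Set (X × X) := (E m)ᶜ ×ˢ (E m)ᶜ with hG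
    have hGm : MeasurableSet G := (hE m).compl.prod (hE m).compl
    set p : X × X → ℝ := G.indicator fun z => s z / (1 + |s z|) with hp
    have hpm : Measurable p := (hsm.div (measurable_const.add hsm.abs)).indicator hGm
    have hps : ∀ z, p z.swap = p z := fun z => by
      have : z.swap ∈ G ↔ z ∈ G := by simp [hG, and_comm]
      by_cases hz : z ∈ G
      · rw [hp, Set.indicator_of_mem hz, Set.indicator_of_mem (this.2 hz), hss]
      · rw [hp, Set.indicator_of_notMem hz, Set.indicator_of_notMem (mt this.1 hz)]
    have hp1 : ∀ z, |p z| ≤ 1 := fun z => by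
      by_cases hz : z ∈ G
      · rw [hp, Set.indicator_of_mem hz, abs_div, abs_of_pos (by positivity : 0 < 1 + |s z|),
          div_le_one (by positivity)]
        linarith
      · simp [hp, hz]
    have hpsl := sl_le_of_bound μ hp1 MeasurableSet.univ (by simp)
    have hMt : ENNReal.ofReal 1 * μ Set.univ ^ (1 / 2 : ℝ) ≠ ∞ := ENNReal.mul_ne_top
      ENNReal.ofReal_ne_top (ENNReal.rpow_ne_top_of_nonneg (by norm_num) (measure_ne_top _ _))
    have hgw : ∀ g : X × X → ℝ, Measurable g → ∫⁻ x, sl μ g x ∂μ ≤ 1 →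
        Integrable (fun z => g z * p z) (μ.prod μ) := fun g hg hg1 =>
      integrable_mul_of_mixed μ hg hpm (ne_top_of_le_ne_top one_ne_top hg1) hMt
        (Eventually.of_forall hpsl)
    have hq0 : ∀ i, ∫ z, q i z * p z ∂(μ.prod μ) = 0 := fun i => by
      have := integral_swap_eq_neg μ (p := p) (hqa i)
      simp only [hps] at this
      linarith
    have h0 : ∫ z, h z * p z ∂(μ.prod μ) = 0 := by
      have hlim := hbite m p hpm _ hMt (Eventually.of_forall hpsl) fun z hz =>
        Set.indicator_of_notMem (fun hzG => hzG.1 hz) _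
      have hc : ∀ i, ∫ z, (q i z - h z) * p z ∂(μ.prod μ) = -∫ z, h z * p z ∂(μ.prod μ) := by
        intro i
        simp only [sub_mul]
        rw [integral_sub (hgw _ (hq i) (hb i)) (hgw _ hh hhb), hq0, zero_sub]
      simp only [hc] at hlim
      exact neg_eq_zero.1 (tendsto_nhds_unique tendsto_const_nhds hlim)
    have hinth := hgw h hh hhb
    have hinths : Integrable (fun z => h z.swap * p z) (μ.prod μ) := by
      have := hinth.swap
      simpa [Function.comp_def, hps] using this
    have h0s : ∫ z, h z.swap * p z ∂(μ.prod μ) = 0 := by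
      rw [← h0, ← integral_prod_swap (fun z => h z * p z)]
      simp only [hps]
    have hsp : ∫ z, s z * p z ∂(μ.prod μ) = 0 := by
      simp only [hs, add_mul]
      rw [integral_add hinth hinths, h0, h0s, add_zero]
    have hspe : ∀ z, s z * p z = G.indicator (fun z => s z ^ 2 / (1 + |s z|)) z := fun z => by
      by_cases hz : z ∈ G
      · rw [hp, Set.indicator_of_mem hz, Set.indicator_of_mem hz]; ring
      · simp [hp, hz]
    have hnn : 0 ≤ fun z => s z * p z := fun z => by
      simp only [hspe]
      exact Set.indicator_nonneg (fun z _ => by positivity) z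
    have hsint : Integrable (fun z => s z * p z) (μ.prod μ) := by
      simp only [hs, add_mul]
      exact hinth.add hinths
    filter_upwards [(integral_eq_zero_iff_of_nonneg hnn hsint).1 hsp] with z hz hzG
    simp only [hspe, Set.indicator_of_mem hzG, Pi.zero_apply] at hz
    have : (1 + |s z|) ≠ 0 := by positivity
    simpa [this] using hz
  -- Almost every point lies outside some `E m`.
  have hcov : ∀ᵐ x ∂μ, ∃ m, x ∉ E m := by
    rw [ae_iff]
    simp only [not_exists, not_not]
    refine le_antisymm (ge_of_tendsto' hE0 fun m => measure_mono fun x hx => hx m) zero_le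
  filter_upwards [ae_all_iff.2 key, Measure.quasiMeasurePreserving_fst.ae hcov,
    Measure.quasiMeasurePreserving_snd.ae hcov] with z hz h1 h2
  obtain ⟨m1, h1⟩ := h1
  obtain ⟨m2, h2⟩ := h2
  have := hz (max m1 m2) ⟨fun hx => h1 (hEanti (le_max_left _ _) hx),
    fun hx => h2 (hEanti (le_max_right _ _) hx)⟩
  simp only [hs] at this
  linarith

/-- Biting convergence of antisymmetric functions upgrades to weak `L¹` convergence. The part of
the test function on `(E m)ᶜ × X` is covered by biting convergence, the part on `E m × (E m)ᶜ`
by biting convergence after exchanging the two variables, and on `E m × E m` the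
Cauchy–Schwarz inequality in the second variable gives a factor `μ (E m) ^ (1 / 2)`. -/
lemma weak_of_bitten (μ : Measure X) [IsFiniteMeasure μ] {q : ℕ → X × X → ℝ}
    (hq : ∀ k, Measurable (q k)) (hb : ∀ k, ∫⁻ x, sl μ (q k) x ∂μ ≤ 1)
    (hqa : ∀ k, ∀ᵐ z ∂(μ.prod μ), q k z = -q k z.swap)
    {h : X × X → ℝ} (hh : Measurable h) (hhb : ∫⁻ x, sl μ h x ∂μ ≤ 1)
    (hha : ∀ᵐ z ∂(μ.prod μ), h z = -h z.swap)
    {E : ℕ → Set X} (hE : ∀ m, MeasurableSet (E m))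
    (hE0 : Tendsto (fun m => μ (E m)) atTop (𝓝 0))
    (hbite : ∀ (m : ℕ) (p : X × X → ℝ), Measurable p → ∀ M : ℝ≥0∞, M ≠ ∞ →
      (∀ᵐ x ∂μ, sl μ p x ≤ M) → (∀ z : X × X, z.1 ∈ E m → p z = 0) →
      Tendsto (fun i => ∫ z, (q i z - h z) * p z ∂(μ.prod μ)) atTop (𝓝 0))
    {p : X × X → ℝ} (hp : Measurable p) {C : ℝ} (hpC : ∀ z, |p z| ≤ C) :
    Tendsto (fun i => ∫ z, (q i z - h z) * p z ∂(μ.prod μ)) atTop (𝓝 0) := by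
  have hind : ∀ (A : Set (X × X)) z, |A.indicator p z| ≤ C := fun A z => by
    by_cases hz : z ∈ A
    · simpa [hz] using hpC z
    · simpa [hz] using (abs_nonneg _).trans (hpC z)
  have hsl : ∀ w : X × X → ℝ, (∀ z, |w z| ≤ C) → ∀ x,
      sl μ w x ≤ ENNReal.ofReal C * μ Set.univ ^ (1 / 2 : ℝ) := fun w hw =>
    sl_le_of_bound μ hw MeasurableSet.univ (by simp)
  have hMt : ENNReal.ofReal C * μ Set.univ ^ (1 / 2 : ℝ) ≠ ∞ := ENNReal.mul_ne_top
    ENNReal.ofReal_ne_top (ENNReal.rpow_ne_top_of_nonneg (by norm_num) (measure_ne_top _ _))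
  have hgw : ∀ i, ∀ w : X × X → ℝ, Measurable w → (∀ z, |w z| ≤ C) →
      Integrable (fun z => (q i z - h z) * w z) (μ.prod μ) := fun i w hw hwC => by
    simp only [sub_mul]
    exact (integrable_mul_of_mixed μ (hq i) hw (ne_top_of_le_ne_top one_ne_top (hb i)) hMt
      (Eventually.of_forall (hsl w hwC))).sub
      (integrable_mul_of_mixed μ hh hw (ne_top_of_le_ne_top one_ne_top hhb) hMt
      (Eventually.of_forall (hsl w hwC)))
  rw [tendsto_zero_iff_enorm_tendsto_zero, ENNReal.tendsto_nhds_zero]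
  intro ε hε
  -- The choice of `m` making the contribution of `E m × E m` small.
  have hsmall : ∃ m, 2 * (ENNReal.ofReal C * μ (E m) ^ (1 / 2 : ℝ)) < ε / 2 := by
    have h1 : Tendsto (fun m => 2 * (ENNReal.ofReal C * μ (E m) ^ (1 / 2 : ℝ))) atTop (𝓝 0) := by
      have h2 : Tendsto (fun m => μ (E m) ^ (1 / 2 : ℝ)) atTop (𝓝 0) := by
        have := (ENNReal.continuous_rpow_const (y := (1 / 2 : ℝ))).tendsto 0 |>.comp hE0
        rw [ENNReal.zero_rpow_of_pos (by norm_num)] at this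
        exact this
      have h3 := ENNReal.Tendsto.const_mul (a := ENNReal.ofReal C) h2 (Or.inr ENNReal.ofReal_ne_top)
      rw [mul_zero] at h3
      have h4 := ENNReal.Tendsto.const_mul (a := 2) h3 (Or.inr ENNReal.ofNat_ne_top)
      rwa [mul_zero] at h4
    exact (h1.eventually_lt_const (ENNReal.half_pos hε.ne')).exists
  obtain ⟨m, hm⟩ := hsmall
  set A : Set (X × X) := (E m)ᶜ ×ˢ Set.univ with hA
  set B : Set (X × X) := E m ×ˢ (E m)ᶜ with hB
  set F : Set (X × X) := E m ×ˢ E m with hF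
  have hAm : MeasurableSet A := (hE m).compl.prod MeasurableSet.univ
  have hBm : MeasurableSet B := (hE m).prod (hE m).compl
  have hFm : MeasurableSet F := (hE m).prod (hE m)
  have hsplit : ∀ z, p z = A.indicator p z + B.indicator p z + F.indicator p z := fun z => by
    classical
    by_cases h1 : z.1 ∈ E m <;> by_cases h2 : z.2 ∈ E m <;>
      simp [hA, hB, hF, Set.mem_prod, h1, h2]
  have hlimA := hbite m _ (hp.indicator hAm) _ hMt (Eventually.of_forall (hsl _ (hind A)))
    fun z hz => Set.indicator_of_notMem (fun hzA => hzA.1 hz) _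
  have hlimB : Tendsto (fun i => ∫ z, (q i z - h z) * B.indicator p z ∂(μ.prod μ)) atTop
      (𝓝 0) := by
    have h1 := hbite m (fun z => B.indicator p z.swap) ((hp.indicator hBm).comp measurable_swap) _
      hMt (Eventually.of_forall (hsl _ fun z => hind B z.swap))
      fun z hz => Set.indicator_of_notMem (fun hzB => hzB.2 hz) _
    have h2 := h1.neg
    rw [neg_zero] at h2
    refine h2.congr fun i => ?_
    refine (integral_swap_eq_neg μ (g := fun z => q i z - h z) (p := B.indicator p) ?_).symm
    filter_upwards [hqa i, hha] with z hz1 hz2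
    rw [hz1, hz2]; ring
  have hlim := hlimA.add hlimB
  rw [add_zero, tendsto_zero_iff_enorm_tendsto_zero, ENNReal.tendsto_nhds_zero] at hlim
  filter_upwards [hlim (ε / 2) (ENNReal.half_pos hε.ne')] with i hi
  have hiA := hgw i _ (hp.indicator hAm) (hind A)
  have hiB := hgw i _ (hp.indicator hBm) (hind B)
  have hiF := hgw i _ (hp.indicator hFm) (hind F)
  have heq : ∫ z, (q i z - h z) * p z ∂(μ.prod μ) =
      (∫ z, (q i z - h z) * A.indicator p z ∂(μ.prod μ) +
        ∫ z, (q i z - h z) * B.indicator p z ∂(μ.prod μ)) +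
        ∫ z, (q i z - h z) * F.indicator p z ∂(μ.prod μ) := by
    have hiAB : Integrable (fun z => (q i z - h z) * A.indicator p z +
        (q i z - h z) * B.indicator p z) (μ.prod μ) := hiA.add hiB
    rw [← integral_add hiA hiB, ← integral_add hiAB hiF]
    refine integral_congr_ae (Eventually.of_forall fun z => ?_)
    simp only [← mul_add]
    rw [← hsplit z]
  have hFle : ‖∫ z, (q i z - h z) * F.indicator p z ∂(μ.prod μ)‖ₑ ≤ ε / 2 := by
    have hslF : ∀ x, sl μ (F.indicator p) x ≤ ENNReal.ofReal C * μ (E m) ^ (1 / 2 : ℝ) :=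
      sl_le_of_bound μ (hind F) (hE m) fun x y hy =>
        Set.indicator_of_notMem (fun hz => hy hz.2) _
    have hg : ∀ g : X × X → ℝ, Measurable g → ∫⁻ x, sl μ g x ∂μ ≤ 1 →
        ∫⁻ z, ‖g z‖ₑ * ‖F.indicator p z‖ₑ ∂(μ.prod μ)
          ≤ ENNReal.ofReal C * μ (E m) ^ (1 / 2 : ℝ) := fun g hg hg1 => by
      refine (holder_mixed μ hg (hp.indicator hFm) (Eventually.of_forall hslF)).trans ?_
      exact (mul_le_mul_left hg1 _).trans (one_mul _).le
    calc _ ≤ ∫⁻ z, (‖q i z‖ₑ * ‖F.indicator p z‖ₑ + ‖h z‖ₑ * ‖F.indicator p z‖ₑ) ∂(μ.prod μ) := by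
          refine (enorm_integral_le_lintegral_enorm _).trans (lintegral_mono fun z => ?_)
          rw [enorm_mul, ← add_mul]
          gcongr
          exact enorm_sub_le
      _ ≤ 2 * (ENNReal.ofReal C * μ (E m) ^ (1 / 2 : ℝ)) := by
          have hm1 : Measurable fun z => ‖q i z‖ₑ * ‖F.indicator p z‖ₑ :=
            (hq i).enorm.mul (hp.indicator hFm).enorm
          rw [lintegral_add_left hm1, two_mul]
          exact add_le_add (hg _ (hq i) (hb i)) (hg _ hh hhb)
      _ ≤ _ := hm.le
  rw [heq]
  exact (enorm_add_le _ _).trans ((add_le_add hi hFle).trans (ENNReal.add_halves ε).le)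

/-- The theorem on an abstract finite measure space, with functions on the product and with
test functions for biting convergence extended by zero to `E m × X`. -/
lemma biting_antisymm [MeasurableSpace.CountablyGenerated X] (μ : Measure X)
    [IsFiniteMeasure μ] (q : ℕ → X × X → ℝ) (hq : ∀ k, Measurable (q k))
    (hqa : ∀ k, ∀ᵐ z ∂(μ.prod μ), q k z = -q k z.swap)
    (hb : ∀ k, ∫⁻ x, sl μ (q k) x ∂μ ≤ 1) :
    ∃ φ : ℕ → ℕ, StrictMono φ ∧ ∃ h : X × X → ℝ, Measurable h ∧
      (∀ᵐ z ∂(μ.prod μ), h z = -h z.swap) ∧ ∫⁻ x, sl μ h x ∂μ ≤ 1 ∧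
      ∃ E : ℕ → Set X, (∀ m, MeasurableSet (E m)) ∧ Antitone E ∧
        Tendsto (fun m => μ (E m)) atTop (𝓝 0) ∧
        (∀ (m : ℕ) (p : X × X → ℝ), Measurable p → ∀ M : ℝ≥0∞, M ≠ ∞ →
          (∀ᵐ x ∂μ, sl μ p x ≤ M) → (∀ z : X × X, z.1 ∈ E m → p z = 0) →
          Tendsto (fun i => ∫ z, (q (φ i) z - h z) * p z ∂(μ.prod μ)) atTop (𝓝 0)) ∧
        (∀ p : X × X → ℝ, Measurable p → ∀ C : ℝ, (∀ z, |p z| ≤ C) →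
          Tendsto (fun i => ∫ z, (q (φ i) z - h z) * p z ∂(μ.prod μ)) atTop (𝓝 0)) := by
  obtain ⟨φ, hφ, r, d, hr, hr2, hw, hc, hT⟩ := exists_subseq_pieces μ q hq hb
  have hd : ∑' j, d j ≤ 1 := ENNReal.tsum_le_of_sum_range_le fun J =>
    le_of_tendsto' (tendsto_finsetSum (Finset.range J) fun j _ => hc j) fun k =>
      (sum_mixed_pc_le μ (hq _) J).trans (hb _)
  have hrd : ∀ j, ∫⁻ x, sl μ (r j) x ∂μ ≤ d j := fun j =>
    mixed_le_of_weak μ (fun k => measurable_pc μ (hq (φ k)) j) (hr j) (hr2 j) (hw j)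
      (fun k => le_rfl) (hc j)
  have hhm : Measurable fun z => ∑' j, r j z := Measurable.tsum hr
  have hhb : ∫⁻ x, sl μ (fun z => ∑' j, r j z) x ∂μ ≤ 1 :=
    mixed_tsum_le_one μ (fun k => hq (φ k)) (fun k => hb (φ k)) hr hr2 hw
      (ae_summable_of_mixed μ hr hrd hd)
  set B : ℕ → Set X := fun i => {x | 2 ^ i ≤ sl μ (q (φ i)) x} with hB
  have hBm : ∀ i, MeasurableSet (B i) := fun i =>
    measurableSet_le measurable_const (measurable_sl μ (hq _))
  have hBle : ∀ i, μ (B i) ≤ 2⁻¹ ^ i := fun i => by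
    refine (meas_ge_le_lintegral_div (measurable_sl μ (hq (φ i))).aemeasurable (by simp)
      (by simp)).trans ?_
    rw [← ENNReal.inv_pow, ← one_div]
    exact ENNReal.div_le_div_right (hb _) _
  set E : ℕ → Set X := fun m => ⋃ i, B (i + m) with hEdef
  have hE : ∀ m, MeasurableSet (E m) := fun m => MeasurableSet.iUnion fun i => hBm _
  have hmem : ∀ {m i x}, m ≤ i → x ∉ E m → sl μ (q (φ i)) x < 2 ^ i := fun {m i x} hmi hx => by
    by_contra hlt
    refine hx (Set.mem_iUnion.2 ⟨i - m, ?_⟩)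
    rw [Nat.sub_add_cancel hmi]
    exact not_lt.1 hlt
  have hEanti : Antitone E := fun a b hab => by
    refine Set.iUnion_subset fun i => ?_
    refine (Set.subset_iUnion (fun i => B (i + a)) (i + (b - a))).trans' ?_
    rw [add_assoc, Nat.sub_add_cancel hab]
  have hE0 : Tendsto (fun m => μ (E m)) atTop (𝓝 0) := by
    have hgeo : ∑' i : ℕ, (2⁻¹ : ℝ≥0∞) ^ i ≠ ∞ := by
      rw [ENNReal.tsum_geometric, ENNReal.one_sub_inv_two]; simp
    refine tendsto_of_tendsto_of_tendsto_of_le_of_le tendsto_const_nhds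
      (ENNReal.tendsto_sum_nat_add _ hgeo) (fun _ => zero_le) fun m => ?_
    exact (measure_iUnion_le _).trans (ENNReal.tsum_le_tsum fun i => hBle _)
  have hbite : ∀ (m : ℕ) (p : X × X → ℝ), Measurable p → ∀ M : ℝ≥0∞, M ≠ ∞ →
      (∀ᵐ x ∂μ, sl μ p x ≤ M) → (∀ z : X × X, z.1 ∈ E m → p z = 0) →
      Tendsto (fun i => ∫ z, (q (φ i) z - ∑' j, r j z) * p z ∂(μ.prod μ)) atTop (𝓝 0) :=
    fun m p hp M hM hpM hpE =>
      tendsto_of_bitten μ (fun k => hq (φ k)) (fun k => hb (φ k)) hr hw hc hT hd hrd hhb hp hM hpM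
        fun i hi z hz => hmem hi fun hzE => hz (hpE z hzE)
  have hha := antisymm_of_bitten μ (fun k => hq (φ k)) (fun k => hb (φ k)) (fun k => hqa (φ k))
    hhm hhb hE hEanti hE0 hbite
  exact ⟨φ, hφ, _, hhm, hha, hhb, E, hE, hEanti, hE0, hbite, fun p hp C hpC =>
    weak_of_bitten μ (fun k => hq (φ k)) (fun k => hb (φ k)) (fun k => hqa (φ k))
      hhm hhb hha hE hE0 hbite hp hpC⟩

end

/-! ### Subsets of Euclidean space -/

lemma ofReal_sq_eq_enorm_rpow (a : ℝ) : ENNReal.ofReal (a ^ 2) = ‖a‖ₑ ^ (2 : ℝ) := by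
  rw [Real.enorm_eq_ofReal_abs, ENNReal.ofReal_rpow_of_nonneg (abs_nonneg a) (by norm_num),
    Real.rpow_two, sq_abs]

lemma slice_eq_sl {X : Type*} [MeasurableSpace X] (μ : Measure X) (p : X → X → ℝ) (x : X) :
    (∫⁻ x', ENNReal.ofReal (p x x' ^ 2) ∂μ) ^ (1 / 2 : ℝ) = sl μ (Function.uncurry p) x := by
  simp only [sl, ofReal_sq_eq_enorm_rpow, Function.uncurry_apply_pair]

/-- The unit ball of the antisymmetric mixed-norm space `L^{1,2}_a(D×D)` is
sequentially compact for biting convergence in `L¹(D;L²(D))`, and for antisymmetric sequences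
biting convergence upgrades to weak convergence in `L¹(D×D)`. -/
theorem stmt10 {n : ℕ} (D : Set (EuclideanSpace ℝ (Fin n)))
    (hDm : MeasurableSet D) (hDb : Bornology.IsBounded D) (hDpos : 0 < volume D)
    (q : ℕ → EuclideanSpace ℝ (Fin n) → EuclideanSpace ℝ (Fin n) → ℝ)
    (hqm : ∀ k, Measurable (Function.uncurry (q k)))
    (hqa : ∀ k, ∀ᵐ p ∂((volume.restrict D).prod (volume.restrict D)),
      q k p.1 p.2 = -q k p.2 p.1)
    (hqb : ∀ k, N12 D (q k) ≤ 1) :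
    ∃ φ : ℕ → ℕ, StrictMono φ ∧
    ∃ qhat : EuclideanSpace ℝ (Fin n) → EuclideanSpace ℝ (Fin n) → ℝ,
      Measurable (Function.uncurry qhat) ∧
      (∀ᵐ p ∂((volume.restrict D).prod (volume.restrict D)), qhat p.1 p.2 = -qhat p.2 p.1) ∧
      N12 D qhat ≤ 1 ∧
    ∃ E : ℕ → Set (EuclideanSpace ℝ (Fin n)),
      (∀ m, MeasurableSet (E m) ∧ E m ⊆ D) ∧ Antitone E ∧
      Tendsto (fun m => volume (E m)) atTop (𝓝 0) ∧
      (∀ m, ∀ p : EuclideanSpace ℝ (Fin n) → EuclideanSpace ℝ (Fin n) → ℝ,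
        Measurable (Function.uncurry p) →
        essSup (fun x => (∫⁻ x' in D, ENNReal.ofReal (p x x' ^ 2)) ^ (1/2 : ℝ))
            (volume.restrict (D \ E m)) < ⊤ →
        Tendsto (fun k => ∫ x in D \ E m, ∫ x' in D,
            (q (φ k) x x' - qhat x x') * p x x') atTop (𝓝 0)) ∧
      (∀ p : EuclideanSpace ℝ (Fin n) → EuclideanSpace ℝ (Fin n) → ℝ,
        Measurable (Function.uncurry p) → (∃ C : ℝ, ∀ x x', |p x x'| ≤ C) →
        Tendsto (fun k => ∫ x in D, ∫ x' in D,
            (q (φ k) x x' - qhat x x') * p x x') atTop (𝓝 0)) := by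
  have : IsFiniteMeasure (volume.restrict D) := isFiniteMeasure_restrict.2 hDb.measure_lt_top.ne
  set μ : Measure (EuclideanSpace ℝ (Fin n)) := volume.restrict D with hμ
  have hN : ∀ g : EuclideanSpace ℝ (Fin n) → EuclideanSpace ℝ (Fin n) → ℝ,
      N12 D g = ∫⁻ x, sl μ (Function.uncurry g) x ∂μ := fun g =>
    lintegral_congr fun x => slice_eq_sl μ g x
  have hb : ∀ k, ∫⁻ x, sl μ (Function.uncurry (q k)) x ∂μ ≤ 1 := fun k => by
    rw [← hN]; exact hqb k
  obtain ⟨φ, hφ, h, hh, hha, hhb, E, hE, hEanti, hE0, hbite, hweak⟩ :=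
    biting_antisymm μ (fun k => Function.uncurry (q k)) hqm hqa hb
  have hgw : ∀ i, ∀ w : EuclideanSpace ℝ (Fin n) × EuclideanSpace ℝ (Fin n) → ℝ,
      Measurable w → ∀ M : ℝ≥0∞, M ≠ ∞ → (∀ᵐ x ∂μ, sl μ w x ≤ M) →
      Integrable (fun z => (Function.uncurry (q (φ i)) z - h z) * w z) (μ.prod μ) :=
    fun i w hw M hM hwM => by
      simp only [sub_mul]
      exact (integrable_mul_of_mixed μ (hqm _) hw (ne_top_of_le_ne_top one_ne_top (hb _)) hM
        hwM).sub (integrable_mul_of_mixed μ hh hw (ne_top_of_le_ne_top one_ne_top hhb) hM hwM)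
  refine ⟨φ, hφ, fun x x' => h (x, x'), hh, hha, ?_, fun m => E m ∩ D,
    fun m => ⟨(hE m).inter hDm, Set.inter_subset_right⟩,
    fun a b hab => Set.inter_subset_inter_left D (hEanti hab), ?_, ?_, ?_⟩
  · rw [hN]; exact hhb
  · refine hE0.congr fun m => ?_
    rw [hμ, Measure.restrict_apply (hE m)]
  · intro m p hp hess
    have hres : volume.restrict (D \ (E m ∩ D)) = μ.restrict (E m)ᶜ := by
      rw [hμ, Measure.restrict_restrict (hE m).compl]
      congr 1
      ext x
      simp only [Set.mem_sdiff, Set.mem_inter_iff, Set.mem_compl_iff]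
      tauto
    simp only [hres, slice_eq_sl] at hess ⊢
    set S : Set (EuclideanSpace ℝ (Fin n) × EuclideanSpace ℝ (Fin n)) := {z | z.1 ∈ (E m)ᶜ}
      with hS
    have hSm : MeasurableSet S := measurable_fst (hE m).compl
    have hpm := hp.indicator hSm
    have hsl : ∀ᵐ x ∂μ, sl μ (S.indicator (Function.uncurry p)) x ≤
        essSup (fun x => sl μ (Function.uncurry p) x) (μ.restrict (E m)ᶜ) := by
      filter_upwards [(ae_restrict_iff' (hE m).compl).1
        (ENNReal.ae_le_essSup (μ := μ.restrict (E m)ᶜ) (sl μ (Function.uncurry p)))] with x hx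
      by_cases hxE : x ∈ E m
      · simp [sl, hS, hxE]
      · refine le_trans (le_of_eq ?_) (hx hxE)
        simp [sl, hS, hxE]
    refine (hbite m _ hpm _ hess.ne hsl fun z hz =>
      Set.indicator_of_notMem (fun hzS : z ∈ S => hzS hz) _).congr fun i => ?_
    rw [integral_prod _ (hgw i _ hpm _ hess.ne hsl), ← integral_indicator (hE m).compl]
    refine integral_congr_ae (Eventually.of_forall fun x => ?_)
    by_cases hxE : x ∈ E m
    · simp [hS, hxE]
    · simp [hS, hxE]
  · rintro p hp ⟨C, hC⟩
    refine (hweak _ hp C fun z => hC z.1 z.2).congr fun i => ?_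
    have hsl := sl_le_of_bound μ (w := Function.uncurry p) (fun z => hC z.1 z.2)
      MeasurableSet.univ (by simp)
    rw [integral_prod _ (hgw i _ hp _ (ENNReal.mul_ne_top ENNReal.ofReal_ne_top
      (ENNReal.rpow_ne_top_of_nonneg (by norm_num) (measure_ne_top _ _)))
      (Eventually.of_forall hsl))]
    rfl
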